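/- Assume all parameters equal: t_α = t for every α ∈ R₀, with t ∈ (−1,1), and for μ ∈ P_c^{∨,+} := {μ ∈ P∨ : 0 ≤ ⟨μ,α⟩ ≤ c ∀α ∈ R₀⁺} let ξ_μ(t) denote the unique global minimum of 𝒱_μ with parameter t. Then t ↦ ξ_μ(t) is continuous (indeed real-analytic) on (−1,1), and lim_{t→0} ξ_μ(t) = (2π/(c + h(R₀))) (ρ∨ + μ), where h(R₀) := ⟨ρ,ϑ∨⟩ + 1 is the Coxeter number (ρ the half-sum of positive roots, ϑ the highest short root), while lim_{t→1⁻} ξ_μ(t) = 2π c⁻¹ μ. -/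

import Mathlib

open scoped RealInnerProductSpace BigOperators Classical

noncomputable section

/-- Alternating composition `A ∘ B ∘ A ∘ ⋯` with `m` factors (starting with `A`). -/
def altComp {α : Type*} (A B : α → α) : ℕ → (α → α)
  | 0 => id
  | m + 1 => A ∘ altComp B A m

/-- The sign of a real number, as an integer (with `sgnZ 0 = 0`). -/
def sgnZ (x : ℝ) : ℤ := if 0 < x then 1 else if x < 0 then -1 else 0

/-- The function `v(x) = (1-t²)∫₀ˣ dy/(1-2t cos y+t²)`. -/
def mvfun (t x : ℝ) : ℝ :=
  (1 - t ^ 2) * ∫ y in (0:ℝ)..x, 1 / (1 - 2 * t * Real.cos y + t ^ 2)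

section AffineOps

variable {V : Type*} [NormedAddCommGroup V] [InnerProductSpace ℝ V]

/-- The coroot `α∨ = 2α/⟨α,α⟩`. -/
def coroot (α : V) : V := (2 / ⟪α, α⟫) • α

/-- The affine root `a = α∨ + r c` (encoded as the pair `(α, r)`), as an affine
function on `V`. -/
def aval (c : ℝ) (a : V × ℤ) (x : V) : ℝ := ⟪x, coroot a.1⟫ + a.2 * c

/-- The affine reflection `s_a(x) = x - a(x) α` attached to `a = α∨ + r c`. -/
def sAff (c : ℝ) (a : V × ℤ) (x : V) : V := x - aval c a x • a.1

/-- `w` maps the affine root `a` to the affine root `b`, i.e. `(wa)(x) = a(w⁻¹x) = b(x)`. -/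
def mapsRoot (c : ℝ) (w : Equiv.Perm V) (a b : V × ℤ) : Prop :=
  ∀ x : V, aval c a (w⁻¹ x) = aval c b x

/-- The linear part `w′` of an affine transformation `w`. -/
def linPart (w : Equiv.Perm V) (x : V) : V := w x - w 0

variable {R : Type*} [Field R]

/-- The difference-reflection operator `T̂_a`. -/
def hatT (c : ℝ) (τ : V × ℤ → R) (a : V × ℤ) (f : V → R) (x : V) : R :=
  if 0 < aval c a x then τ a * f (sAff c a x)
  else if aval c a x = 0 then τ a * f x
  else (τ a)⁻¹ * f (sAff c a x) + (τ a - (τ a)⁻¹) * f x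

/-- The discrete integral operator `J_a`. -/
def Jop (c : ℝ) (a : V × ℤ) (f : V → R) (x : V) : R :=
  if 0 < aval c a x then
    - ∑ k ∈ Finset.Icc (1 : ℤ) ⌊aval c a x⌋, f (x - k • a.1)
  else if aval c a x = 0 then 0
  else ∑ k ∈ Finset.Ico (0 : ℤ) (-⌊aval c a x⌋), f (x + k • a.1)

/-- The integral-reflection operator `I_a = τ_a s_a + (τ_a - τ_a⁻¹) J_a`. -/
def Iop (c : ℝ) (τ : V × ℤ → R) (a : V × ℤ) (f : V → R) (x : V) : R :=
  τ a * f (sAff c a x) + (τ a - (τ a)⁻¹) * Jop c a f x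

end AffineOps

/-- An irreducible reduced crystallographic root system spanning `V`, together with a
choice of positive roots, simple roots, and the highest short root. -/
structure RootSystemData (V : Type*) [NormedAddCommGroup V] [InnerProductSpace ℝ V] :
    Type _ where
  n : ℕ
  n_pos : 1 ≤ n
  rank_eq : Module.finrank ℝ V = n
  R0 : Finset V
  ne_zero : ∀ α ∈ R0, α ≠ (0 : V)
  span_top : Submodule.span ℝ (R0 : Set V) = ⊤
  reduced : ∀ α ∈ R0, ∀ t : ℝ, t • α ∈ R0 → t = 1 ∨ t = -1
  crystallographic : ∀ α ∈ R0, ∀ β ∈ R0, ∃ k : ℤ, ⟪β, coroot α⟫ = (k : ℝ)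
  reflect_mem : ∀ α ∈ R0, ∀ β ∈ R0, β - ⟪β, coroot α⟫ • α ∈ R0
  irreducible : ∀ S : Finset V, S ⊆ R0 →
      (∀ a ∈ S, ∀ b ∈ R0, b ∉ S → ⟪a, b⟫ = 0) → S = ∅ ∨ S = R0
  pos : Finset V
  pos_subset : pos ⊆ R0
  pos_or_neg : ∀ α ∈ R0, α ∈ pos ∨ -α ∈ pos
  pos_not_both : ∀ α ∈ pos, -α ∉ pos
  pos_add : ∀ α ∈ pos, ∀ β ∈ pos, α + β ∈ R0 → α + β ∈ pos
  simpleRoot : Fin n → V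
  simpleRoot_mem : ∀ j, simpleRoot j ∈ pos
  pos_natCombo : ∀ α ∈ pos, ∃ k : Fin n → ℕ, α = ∑ j, (k j : ℝ) • simpleRoot j
  hshort : V
  hshort_mem : hshort ∈ pos
  hshort_short : ∀ α ∈ R0, ‖hshort‖ ≤ ‖α‖
  hshort_highest : ∀ α ∈ R0, ‖α‖ = ‖hshort‖ →
      ∃ k : Fin n → ℕ, hshort - α = ∑ j, (k j : ℝ) • simpleRoot j

namespace RootSystemData

variable {V : Type*} [NormedAddCommGroup V] [InnerProductSpace ℝ V]
variable (D : RootSystemData V)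

/-- The weight lattice `P`. -/
def weightLattice : Set V :=
  {x : V | ∀ α ∈ D.R0, ∃ k : ℤ, ⟪x, coroot α⟫ = (k : ℝ)}

/-- The root lattice `Q`. -/
def rootLattice : Set V := (Submodule.span ℤ (D.R0 : Set V) : Set V)

/-- The coweight lattice `P∨`. -/
def coweightLattice : Set V :=
  {x : V | ∀ α ∈ D.R0, ∃ k : ℤ, ⟪x, α⟫ = (k : ℝ)}

/-- The dominant cone. -/
def dominant : Set V := {x : V | ∀ α ∈ D.pos, 0 ≤ ⟪x, coroot α⟫}

/-- `ω` is a minuscule (dominant) weight. -/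
def IsMinuscule (ω : V) : Prop :=
  ω ∈ D.weightLattice ∧ ω ∈ D.dominant ∧ ω ≠ 0 ∧
    ∀ α ∈ D.pos, ⟪ω, coroot α⟫ ≤ 1

/-- `ω` is the quasi-minuscule weight, i.e. the highest short root. -/
def IsQuasiMinuscule (ω : V) : Prop := ω = D.hshort

/-- The saturated set `P_ϑ` containing the (quasi-)minuscule weights. -/
def Ptheta : Set V :=
  {ν : V | ν ∈ D.weightLattice ∧ ∀ α ∈ D.R0, α ≠ ν → |⟪ν, coroot α⟫| ≤ 1}

/-- Half sum of the positive roots. -/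
def rhoHalf : V := (2⁻¹ : ℝ) • ∑ α ∈ D.pos, α

/-- Half sum of the positive coroots. -/
def rhoVee : V := (2⁻¹ : ℝ) • ∑ α ∈ D.pos, coroot α

/-- `(α, r)` encodes an affine root. -/
def IsAffRoot (a : V × ℤ) : Prop := a.1 ∈ D.R0

/-- `(α, r)` encodes a positive affine root. -/
def IsAffPos (a : V × ℤ) : Prop :=
  a.1 ∈ D.R0 ∧ (1 ≤ a.2 ∨ (a.2 = 0 ∧ a.1 ∈ D.pos))

/-- `(α, r)` encodes a negative affine root. -/
def IsAffNeg (a : V × ℤ) : Prop := D.IsAffPos (-a.1, -a.2)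

/-- The simple affine roots `a₀ = -ϑ∨ + c`, `a_j = α_j∨`. -/
def aSimple (j : Fin (D.n + 1)) : V × ℤ :=
  Fin.cons (α := fun _ => V × ℤ) (-D.hshort, (1 : ℤ))
    (fun i => (D.simpleRoot i, (0 : ℤ))) j

/-- The reflections generating the finite Weyl group `W₀`. -/
def W0Gens : Set (Equiv.Perm V) :=
  {e | ∃ α ∈ D.R0, ∀ x, e x = x - ⟪x, coroot α⟫ • α}

/-- The finite Weyl group `W₀`. -/
def W0 : Subgroup (Equiv.Perm V) := Subgroup.closure D.W0Gens

variable (c : ℝ)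

/-- The affine reflections generating the affine Weyl group `W_R`. -/
def AffGens : Set (Equiv.Perm V) :=
  {e | ∃ a : V × ℤ, D.IsAffRoot a ∧ ∀ x, e x = sAff c a x}

/-- The affine Weyl group `W_R`. -/
def WR : Subgroup (Equiv.Perm V) := Subgroup.closure (D.AffGens c)

/-- The translations `t_{cλ}`, `λ ∈ P`. -/
def TransGens : Set (Equiv.Perm V) :=
  {e | ∃ lam ∈ D.weightLattice, ∀ x : V, e x = x + c • lam}

/-- The extended affine Weyl group `W = W₀ ⋉ t(cP)`. -/
def Wext : Subgroup (Equiv.Perm V) :=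
  Subgroup.closure (D.AffGens c ∪ D.TransGens c)

/-- The set `R(w) = R⁺ ∩ w⁻¹(R⁻)`. -/
def RW (w : Equiv.Perm V) : Set (V × ℤ) :=
  {a | D.IsAffPos a ∧ ∃ b : V × ℤ, D.IsAffNeg b ∧ mapsRoot c w a b}

/-- The length `ℓ(w) = #R(w)`. -/
def len (w : Equiv.Perm V) : ℕ := (D.RW c w).ncard

/-- The closed fundamental alcove `A_c`. -/
def alcove : Set V := {x | ∀ a : V × ℤ, D.IsAffPos a → 0 ≤ aval c a x}

/-- `wmin x` is the unique shortest element of the affine Weyl group mapping `x` into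
the fundamental alcove. -/
def IsWmin (wmin : V → Equiv.Perm V) : Prop :=
  ∀ x : V, wmin x ∈ D.WR c ∧ (wmin x) x ∈ D.alcove c ∧
    ∀ w ∈ D.WR c, w x ∈ D.alcove c → D.len c (wmin x) < D.len c w ∨ w = wmin x

/-- One step in the Bruhat order: `w < w s_a` whenever `ℓ(w) < ℓ(w s_a)`. -/
def bruhatStep (w w' : Equiv.Perm V) : Prop :=
  ∃ a : V × ℤ, D.IsAffPos a ∧ ∃ e : Equiv.Perm V,
    (∀ x, e x = sAff c a x) ∧ w' = w * e ∧ D.len c w < D.len c w'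

/-- The Bruhat order on the affine Weyl group. -/
def bruhatLE (w w' : Equiv.Perm V) : Prop :=
  Relation.ReflTransGen (D.bruhatStep c) w w'

/-- The partial order on `V`: `x ≤ y` iff `x₊ = y₊` and `w_x ≤ w_y` (Bruhat). -/
def vle (wmin : V → Equiv.Perm V) (x y : V) : Prop :=
  (wmin x) x = (wmin y) y ∧ D.bruhatLE c (wmin x) (wmin y)

/-- The interval `[x, y]` for the order `vle`. -/
def vInterval (wmin : V → Equiv.Perm V) (x y : V) : Set V :=
  {z : V | D.vle c wmin x z ∧ D.vle c wmin z y}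

/-- The partial order `⪯` on the weight lattice:
`μ ⪯ λ` iff `λ - μ ∈ Q` and `Conv [μ₊, μ] ⊆ Conv [λ₊, λ]`. -/
def pleq (wmin : V → Equiv.Perm V) (μ lam : V) : Prop :=
  lam - μ ∈ D.rootLattice ∧
    convexHull ℝ (D.vInterval c wmin ((wmin μ) μ) μ)
      ⊆ convexHull ℝ (D.vInterval c wmin ((wmin lam) lam) lam)

section Ops

variable {R : Type*} [Field R]

/-- `τ` is a multiplicity function: nonvanishing on affine roots, and invariant
under the (extended affine) Weyl group action on the affine roots. -/
def IsMultiplicity (τ : V × ℤ → R) : Prop :=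
  (∀ a : V × ℤ, D.IsAffRoot a → τ a ≠ 0) ∧
    ∀ w ∈ D.Wext c, ∀ a b : V × ℤ, D.IsAffRoot a → D.IsAffRoot b →
      mapsRoot c w a b → τ a = τ b

/-- `τ_w = ∏_{a ∈ R(w)} τ_a`. -/
def tauw (τ : V × ℤ → R) (w : Equiv.Perm V) : R := ∏ᶠ a ∈ D.RW c w, τ a

/-- `τ₀`, the multiplicity of the affine simple root `a₀`. -/
def tauZero (τ : V × ℤ → R) : R := τ (-D.hshort, (1 : ℤ))

/-- The operator `I_{j₁} ∘ ⋯ ∘ I_{jℓ}` attached to a word in the simple reflections. -/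
def wordOp (τ : V × ℤ → R) (l : List (Fin (D.n + 1))) : (V → R) → V → R :=
  (l.map fun j => Iop c τ (D.aSimple j)).foldr (· ∘ ·) id

/-- `l` is a reduced word for `w`, i.e. `w = s_{j₁} ∘ ⋯ ∘ s_{jℓ}` with `ℓ = ℓ(w)`. -/
def IsReducedWord (w : Equiv.Perm V) (l : List (Fin (D.n + 1))) : Prop :=
  l.length = D.len c w ∧
    ∀ x : V, w x = ((l.map fun j => sAff c (D.aSimple j)).foldr (· ∘ ·) id) x

/-- `e∨_τ(η) = ∏_{α ∈ R₀⁺} τ_{α∨}^{⟨η,α∨⟩}`. -/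
def etau (τ : V × ℤ → R) (η : V) : R :=
  ∏ α ∈ D.pos, τ (α, (0 : ℤ)) ^ ⌊⟪η, coroot α⟫⌋

/-- `h∨_τ = τ₀² e∨_τ(ϑ)`. -/
def hvee (τ : V × ℤ → R) : R := D.tauZero τ ^ 2 * D.etau τ D.hshort

/-- `θ(μ) = #{b ∈ R(w_μ) : b(μ) = -2}`. -/
def theta (wmin : V → Equiv.Perm V) (μ : V) : ℕ :=
  {b : V × ℤ | b ∈ D.RW c (wmin μ) ∧ aval c b μ = -2}.ncard

/-- The coefficient `c_{λ,η} = θ(λ-η) e∨_τ(η) (h∨_τ)^{-sign⟨λ,η∨⟩}`. -/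
def ccoef (τ : V × ℤ → R) (wmin : V → Equiv.Perm V) (lam η : V) : R :=
  (D.theta c wmin (lam - η) : R) * D.etau τ η *
    D.hvee τ ^ (-sgnZ ⟪lam, coroot η⟫)

/-- The coefficient `a_{λ,ν} = τ_{w_{w_λ(λ-ν)}} τ_{w_{w_λ(λ-ν)} w_λ} τ_{w_λ}⁻¹`. -/
def acoef (τ : V × ℤ → R) (wmin : V → Equiv.Perm V) (lam ν : V) : R :=
  D.tauw c τ (wmin ((wmin lam) (lam - ν))) *
    D.tauw c τ (wmin ((wmin lam) (lam - ν)) * wmin lam) *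
    (D.tauw c τ (wmin lam))⁻¹

/-- The coefficient `b_{λ,ν}`. -/
def bcoef (τ : V × ℤ → R) (wmin : V → Equiv.Perm V) (lam ν : V) : R :=
  if (wmin (lam - ν)) (lam - ν) = (wmin lam) lam then
    D.tauw c τ (wmin ((wmin lam) (lam - ν))) ^ 2 *
      (if D.IsAffNeg (ν, ⌊(1 - ⟪lam, coroot ν⟫) / c⌋) then 1 else 0)
  else D.ccoef c τ wmin ((wmin lam) lam) (linPart (wmin lam) ν)

/-- The intertwining operator `(𝒥f)(λ) = τ_{w_λ}⁻¹ (I_{w_λ} f)(λ₊)`, where `Iw` assigns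
to each `w_λ` the composite of integral-reflection operators along a reduced word. -/
def Jcal (τ : V × ℤ → R) (wmin : V → Equiv.Perm V)
    (Iw : Equiv.Perm V → (V → R) → V → R) (f : V → R) (x : V) : R :=
  (D.tauw c τ (wmin x))⁻¹ * Iw (wmin x) f ((wmin x) x)

end Ops

/-- The Yang–Yang type Morse function `𝒱_μ`. -/
def morse (t : V → ℝ) (μ ξ : V) : ℝ :=
  (c / 2) * ⟪ξ, ξ⟫ - 2 * Real.pi * ⟪D.rhoVee + μ, ξ⟫ +
    ∑ α ∈ D.pos, (2 / ⟪α, α⟫) * ∫ x in (0:ℝ)..(⟪ξ, α⟫), mvfun (t α) x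

/-- The critical equation `cξ + ∑_{α>0} v_α(⟨ξ,α⟩) α∨ = 2π(ρ∨+μ)`. -/
def criticalEq (t : V → ℝ) (μ ξ : V) : Prop :=
  c • ξ + ∑ α ∈ D.pos, mvfun (t α) ⟪ξ, α⟫ • coroot α
    = (2 * Real.pi) • (D.rhoVee + μ)

/-- The Hessian bilinear form `H_{η,ζ}(ξ)`. -/
def hessForm (t : V → ℝ) (ξ η ζ : V) : ℝ :=
  c * ⟪η, ζ⟫ + ∑ α ∈ D.R0,
    (1 - t α ^ 2) * ⟪η, α⟫ * ⟪ζ, α⟫ /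
      (⟪α, α⟫ * (1 - 2 * t α * Real.cos ⟪ξ, α⟫ + t α ^ 2))

/-- `κ_± = (2/n) ∑_{α>0} (1-t_α²)/(1 ± |t_α|)²`; here `s = ±1`. -/
def kappaPM (t : V → ℝ) (s : ℝ) : ℝ :=
  (2 / (D.n : ℝ)) * ∑ α ∈ D.pos, (1 - t α ^ 2) / (1 + s * |t α|) ^ 2

end RootSystemData

/-! ### The function `v` in closed form -/

/-- Closed form of `v(x;t)`. -/
def vcl (t x : ℝ) : ℝ := x + 2 * Real.arctan (t * Real.sin x / (1 - t * Real.cos x))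

lemma den1_pos {t : ℝ} (ht : t ∈ Set.Ioo (-1 : ℝ) 1) (x : ℝ) : 0 < 1 - t * Real.cos x := by
  have h1 : |t * Real.cos x| < 1 := by
    rw [abs_mul]
    have := abs_lt.2 ht
    have := Real.abs_cos_le_one x
    nlinarith [abs_nonneg t, abs_nonneg (Real.cos x)]
  linarith [(abs_lt.1 h1).2]

lemma den2_pos {t : ℝ} (ht : t ∈ Set.Ioo (-1 : ℝ) 1) (x : ℝ) :
    0 < 1 - 2 * t * Real.cos x + t ^ 2 := by
  have := den1_pos ht x
  have h2 := Real.sin_sq_add_cos_sq x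
  nlinarith [mul_pos this this, sq_nonneg (t * Real.sin x)]

/-- The derivative of `v(·;t)`. -/
def vder (t x : ℝ) : ℝ := (1 - t ^ 2) / (1 - 2 * t * Real.cos x + t ^ 2)

lemma vder_pos {t : ℝ} (ht : t ∈ Set.Ioo (-1 : ℝ) 1) (x : ℝ) : 0 < vder t x := by
  refine div_pos ?_ (den2_pos ht x)
  nlinarith [ht.1, ht.2]

lemma hasDerivAt_vcl {t : ℝ} (ht : t ∈ Set.Ioo (-1 : ℝ) 1) (x : ℝ) :
    HasDerivAt (vcl t) (vder t x) x := by
  have h1 := den1_pos ht x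
  have h2 := den2_pos ht x
  have hq : HasDerivAt (fun x => t * Real.sin x / (1 - t * Real.cos x))
      ((t * Real.cos x * (1 - t * Real.cos x) - t * Real.sin x * (t * Real.sin x)) /
        (1 - t * Real.cos x) ^ 2) x := by
    refine ((Real.hasDerivAt_sin x).const_mul t).div ?_ h1.ne'
    simpa using ((Real.hasDerivAt_cos x).const_mul t).const_sub 1
  have := (hasDerivAt_id x).add ((hq.arctan).const_mul 2)
  convert! this using 1
  have hs : Real.sin x ^ 2 = 1 - Real.cos x ^ 2 := by linarith [Real.sin_sq_add_cos_sq x]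
  have h3 : 1 + (t * Real.sin x / (1 - t * Real.cos x)) ^ 2 =
      (1 - 2 * t * Real.cos x + t ^ 2) / (1 - t * Real.cos x) ^ 2 := by
    field_simp
    rw [hs]; ring
  rw [h3, vder]
  have h4 : t * Real.cos x * (1 - t * Real.cos x) - t * Real.sin x * (t * Real.sin x) =
      t * Real.cos x - t ^ 2 := by
    linear_combination (-t ^ 2) * hs
  rw [h4]
  have h2' := h2.ne'
  have h1' := h1.ne'
  generalize 1 - t * Real.cos x = A at h1'
  have e : 1 / ((1 - 2 * t * Real.cos x + t ^ 2) / A ^ 2) * ((t * Real.cos x - t ^ 2) / A ^ 2) =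
      (t * Real.cos x - t ^ 2) / (1 - 2 * t * Real.cos x + t ^ 2) := by
    field_simp
  rw [e]
  generalize hB : 1 - 2 * t * Real.cos x + t ^ 2 = B at h2'
  rw [eq_comm, eq_div_iff h2', add_mul, mul_assoc, div_mul_cancel₀ _ h2', ← hB]
  ring

lemma mvfun_eq_vcl {t : ℝ} (ht : t ∈ Set.Ioo (-1 : ℝ) 1) : mvfun t = vcl t := by
  funext x
  unfold mvfun
  rw [← intervalIntegral.integral_const_mul]
  have : (fun y => (1 - t ^ 2) * (1 / (1 - 2 * t * Real.cos y + t ^ 2))) = vder t := by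
    funext y; simp [vder, div_eq_mul_inv]
  rw [this, intervalIntegral.integral_eq_sub_of_hasDerivAt (f := vcl t)]
  · simp [vcl]
  · intro y _; exact hasDerivAt_vcl ht y
  · apply Continuous.intervalIntegrable
    unfold vder
    exact Continuous.div (by fun_prop) (by fun_prop) (fun y => (den2_pos ht y).ne')

lemma vcl_mono {t : ℝ} (ht : t ∈ Set.Ioo (-1 : ℝ) 1) : Monotone (vcl t) :=
  monotone_of_hasDerivAt_nonneg (fun x => hasDerivAt_vcl ht x) (fun x => (vder_pos ht x).le)

lemma vcl_zero (x : ℝ) : vcl 0 x = x := by simp [vcl]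

lemma vcl_one {x : ℝ} (h0 : 0 < x) (h1 : x < 2 * Real.pi) : vcl 1 x = Real.pi := by
  have hs : 0 < Real.sin (x / 2) := Real.sin_pos_of_pos_of_lt_pi (by linarith) (by linarith)
  have hx : x = 2 * (x / 2) := by ring
  have e : 1 * Real.sin x / (1 - 1 * Real.cos x) = Real.tan (Real.pi / 2 - x / 2) := by
    rw [Real.tan_pi_div_two_sub, Real.tan_eq_sin_div_cos, inv_div]
    conv_lhs => rw [hx, Real.sin_two_mul, Real.cos_two_mul]
    have : 1 - 1 * (2 * Real.cos (x / 2) ^ 2 - 1) = 2 * Real.sin (x / 2) ^ 2 := by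
      linarith [Real.sin_sq_add_cos_sq (x / 2)]
    rw [this]
    field_simp
  rw [vcl, e, Real.arctan_tan (by linarith) (by linarith)]
  ring

lemma vcl_tendsto {x : ℝ} (h0 : 0 < x) (h1 : x < 2 * Real.pi) :
    Filter.Tendsto (fun t => vcl t x) (nhds 1) (nhds Real.pi) := by
  have hs : 0 < Real.sin (x / 2) := Real.sin_pos_of_pos_of_lt_pi (by linarith) (by linarith)
  have hx : x = 2 * (x / 2) := by ring
  have hne : 1 - 1 * Real.cos x ≠ 0 := by
    rw [hx, Real.cos_two_mul]
    nlinarith [Real.sin_sq_add_cos_sq (x / 2)]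
  have : ContinuousAt (fun t => vcl t x) 1 := by
    unfold vcl
    refine continuousAt_const.add (continuousAt_const.mul
      (Real.continuous_arctan.continuousAt.comp ?_))
    exact ContinuousAt.div (by fun_prop) (by fun_prop) hne
  have h := this.tendsto
  rwa [vcl_one h0 h1] at h

namespace RootSystemData

variable {V : Type*} [NormedAddCommGroup V] [InnerProductSpace ℝ V]
variable (D : RootSystemData V)

lemma finDim {V : Type*} [NormedAddCommGroup V] [InnerProductSpace ℝ V]
    (D : RootSystemData V) : FiniteDimensional ℝ V :=
  FiniteDimensional.of_finrank_pos (by rw [D.rank_eq]; exact D.n_pos)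

lemma pos_ne {α : V} (h : α ∈ D.pos) : α ≠ 0 := D.ne_zero α (D.pos_subset h)

lemma inner_self_pos' {α : V} (h : α ≠ 0) : 0 < ⟪α, α⟫ := real_inner_self_pos.2 h

/-! ### Simple roots form a basis -/

lemma simple_span : ⊤ ≤ Submodule.span ℝ (Set.range D.simpleRoot) := by
    rw [← D.span_top, Submodule.span_le]
    have hp : ∀ α ∈ D.pos, α ∈ Submodule.span ℝ (Set.range D.simpleRoot) := by
      intro α hα
      obtain ⟨k, hk⟩ := D.pos_natCombo α hα
      rw [hk]
      exact Submodule.sum_mem _ fun j _ => Submodule.smul_mem _ _ (Submodule.subset_span ⟨j, rfl⟩)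
    intro α hα
    rcases D.pos_or_neg α hα with h | h
    · exact hp α h
    · simpa using Submodule.neg_mem _ (hp _ h)

lemma simple_linInd : LinearIndependent ℝ D.simpleRoot := by
  have := D.finDim
  exact linearIndependent_of_top_le_span_of_card_eq_finrank D.simple_span (by simp [D.rank_eq])

/-- A strictly dominant vector. -/
lemma exists_dominant : ∃ p : V, ∀ α ∈ D.pos, 0 < ⟪p, α⟫ := by
  have := D.finDim
  let b := Module.Basis.mk D.simple_linInd D.simple_span
  let f : V →ₗ[ℝ] ℝ := b.constr ℝ (fun _ => (1 : ℝ))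
  have hf : ∀ j, f (D.simpleRoot j) = 1 := by
    intro j
    have : b j = D.simpleRoot j := by simp [b]
    rw [← this]; simp [f]
  refine ⟨(InnerProductSpace.toDual ℝ V).symm f.toContinuousLinearMap, fun α hα => ?_⟩
  rw [InnerProductSpace.toDual_symm_apply]
  obtain ⟨k, hk⟩ := D.pos_natCombo α hα
  have e : f α = ∑ j, (k j : ℝ) := by
    rw [hk, map_sum]; simp [hf]
  change 0 < f α
  rw [e]
  refine lt_of_le_of_ne (Finset.sum_nonneg fun _ _ => Nat.cast_nonneg _) fun h0 => ?_
  rw [eq_comm, Finset.sum_eq_zero_iff_of_nonneg (fun _ _ => Nat.cast_nonneg _)] at h0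
  apply D.pos_ne hα
  rw [hk]
  exact Finset.sum_eq_zero fun j hj => by rw [h0 j hj, zero_smul]

lemma exists_small_dominant : ∃ p : V, ∀ α ∈ D.pos, 0 < ⟪p, α⟫ ∧ ⟪p, α⟫ < 2 * Real.pi := by
  obtain ⟨p, hp⟩ := D.exists_dominant
  have hS : 0 ≤ ∑ α ∈ D.pos, ⟪p, α⟫ := Finset.sum_nonneg fun α h => (hp α h).le
  set S := ∑ α ∈ D.pos, ⟪p, α⟫
  refine ⟨(1 / (S + 1)) • p, fun α hα => ?_⟩
  rw [real_inner_smul_left]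
  have h1 : ⟪p, α⟫ ≤ S := Finset.single_le_sum (f := fun α => ⟪p, α⟫)
    (fun α h => (hp α h).le) hα
  refine ⟨mul_pos (by positivity) (hp α hα), ?_⟩
  have : 1 / (S + 1) * ⟪p, α⟫ < 1 := by
    rw [div_mul_eq_mul_div, div_lt_one (by linarith)]; linarith
  linarith [Real.pi_gt_three]

/-! ### The Casimir-type operator is the Coxeter number -/

lemma inner_coroot (x α : V) : ⟪x, coroot α⟫ = 2 * ⟪x, α⟫ / ⟪α, α⟫ := by
  rw [coroot, real_inner_smul_right]; ring

/-- The reflection in a root, acting on vectors. -/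
def rfl' (α x : V) : V := x - ⟪x, coroot α⟫ • α

lemma inner_rfl' (β : V) (x y : V) : ⟪rfl' β x, y⟫ = ⟪x, rfl' β y⟫ := by
  simp only [rfl', inner_sub_left, inner_sub_right, real_inner_smul_left, real_inner_smul_right,
    inner_coroot]
  rw [real_inner_comm β y]; ring

lemma rfl'_rfl' {β : V} (hβ : β ≠ 0) (x : V) : rfl' β (rfl' β x) = x := by
  have h := (inner_self_pos' hβ).ne'
  have e : ⟪rfl' β x, coroot β⟫ = -⟪x, coroot β⟫ := by
    simp only [rfl', inner_sub_left, real_inner_smul_left, inner_coroot]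
    field_simp; ring
  rw [rfl', e, rfl']; simp

lemma rfl'_norm {β : V} (hβ : β ≠ 0) (x : V) : ⟪rfl' β x, rfl' β x⟫ = ⟪x, x⟫ := by
  rw [inner_rfl', rfl'_rfl' hβ]

lemma neg_mem {α : V} (h : α ∈ D.R0) : -α ∈ D.R0 := by
  have := D.reflect_mem α h α h
  rw [inner_coroot, mul_div_assoc, div_self (inner_self_pos' (D.ne_zero α h)).ne'] at this
  convert! this using 1
  rw [mul_one, two_smul]; abel

/-- `∑_{α > 0} ⟨x, α⟩⟨α∨, y⟩`. -/
def qf (x y : V) : ℝ := ∑ α ∈ D.pos, 2 / ⟪α, α⟫ * (⟪x, α⟫ * ⟪y, α⟫)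

lemma qf_R0 (x y : V) : 2 * D.qf x y = ∑ α ∈ D.R0, 2 / ⟪α, α⟫ * (⟪x, α⟫ * ⟪y, α⟫) := by
  have hR : D.R0 = D.pos ∪ D.pos.image (fun a => -a) := by
    ext a
    simp only [Finset.mem_union, Finset.mem_image]
    constructor
    · intro h
      rcases D.pos_or_neg a h with h | h
      · exact Or.inl h
      · exact Or.inr ⟨-a, h, neg_neg a⟩
    · rintro (h | ⟨b, hb, rfl⟩)
      · exact D.pos_subset h
      · exact D.neg_mem (D.pos_subset hb)
  have hd : Disjoint D.pos (D.pos.image (fun a => -a)) := by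
    rw [Finset.disjoint_left]
    intro a ha h
    obtain ⟨b, hb, rfl⟩ := Finset.mem_image.1 h
    exact D.pos_not_both b hb ha
  rw [hR, Finset.sum_union hd, Finset.sum_image (fun a _ b _ h => neg_injective h)]
  simp only [inner_neg_left, inner_neg_right, neg_mul_neg, neg_neg]
  rw [qf]; ring

lemma qf_rfl {β : V} (hβ : β ∈ D.R0) (x y : V) : D.qf (rfl' β x) (rfl' β y) = D.qf x y := by
  have hb := D.ne_zero β hβ
  have : 2 * D.qf (rfl' β x) (rfl' β y) = 2 * D.qf x y := by
    rw [qf_R0, qf_R0]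
    refine Finset.sum_nbij' (rfl' β) (rfl' β) ?_ ?_ ?_ ?_ ?_
    · exact fun a ha => D.reflect_mem β hβ a ha
    · exact fun a ha => D.reflect_mem β hβ a ha
    · exact fun a _ => rfl'_rfl' hb a
    · exact fun a _ => rfl'_rfl' hb a
    · intro a _
      rw [inner_rfl', inner_rfl', rfl'_norm hb]
  linarith

/-- `∑_{α > 0} ⟨x, α⟩ α∨`. -/
def cas (x : V) : V := ∑ α ∈ D.pos, ⟪x, α⟫ • coroot α

lemma inner_cas (x y : V) : ⟪D.cas x, y⟫ = D.qf x y := by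
  rw [cas, sum_inner, qf]
  refine Finset.sum_congr rfl fun α _ => ?_
  rw [real_inner_smul_left, real_inner_comm y (coroot α), inner_coroot]; ring

lemma qf_symm (x y : V) : D.qf x y = D.qf y x := by
  unfold qf
  exact Finset.sum_congr rfl fun α _ => by ring

lemma cas_root {β : V} (hβ : β ∈ D.R0) : ∃ l : ℝ, D.cas β = l • β := by
  have hb := D.ne_zero β hβ
  have hself : rfl' β β = -β := by
    rw [rfl', inner_coroot, mul_div_assoc, div_self (inner_self_pos' hb).ne', mul_one, two_smul]
    abel
  have h : rfl' β (D.cas β) = -D.cas β := by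
    refine ext_inner_right ℝ fun y => ?_
    rw [inner_rfl', inner_cas, inner_neg_left, inner_cas, ← D.qf_rfl hβ, rfl'_rfl' hb, hself]
    simp [qf]
  refine ⟨⟪D.cas β, coroot β⟫ / 2, ?_⟩
  rw [rfl', sub_eq_iff_eq_add] at h
  have h2 : (2 : ℝ) • D.cas β = ⟪D.cas β, coroot β⟫ • β := by
    rw [two_smul]
    nth_rw 1 [h]
    abel
  rw [div_eq_inv_mul, mul_smul, ← h2, smul_smul]
  norm_num

lemma cas_eq_smul : ∃ l : ℝ, ∀ x, D.cas x = l • x := by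
  have hϑ := D.pos_subset D.hshort_mem
  obtain ⟨l, hl⟩ := D.cas_root hϑ
  refine ⟨l, ?_⟩
  have hS := D.irreducible (D.R0.filter fun β => D.cas β = l • β) (Finset.filter_subset _ _) (by
    intro a ha b hb hbS
    rw [Finset.mem_filter] at ha
    obtain ⟨m, hm⟩ := D.cas_root hb
    by_contra hne
    apply hbS
    rw [Finset.mem_filter]
    refine ⟨hb, ?_⟩
    have := D.qf_symm a b
    rw [← inner_cas, ← inner_cas, ha.2, hm, real_inner_smul_left, real_inner_smul_left,
      real_inner_comm a b] at this
    have : l = m := mul_right_cancel₀ hne this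
    rw [hm, this])
  have hS' : (D.R0.filter fun β => D.cas β = l • β) = D.R0 := by
    rcases hS with h | h
    · have : D.hshort ∈ (D.R0.filter fun β => D.cas β = l • β) :=
        Finset.mem_filter.2 ⟨hϑ, hl⟩
      rw [h] at this
      simp at this
    · exact h
  intro x
  have hx : x ∈ Submodule.span ℝ (D.R0 : Set V) := by rw [D.span_top]; trivial
  induction hx using Submodule.span_induction with
  | mem x hx =>
    have hx' : x ∈ D.R0 := hx
    rw [← hS'] at hx'
    exact (Finset.mem_filter.1 hx').2
  | zero => simp [cas]
  | add x y _ _ hx hy =>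
    rw [smul_add, ← hx, ← hy]
    simp [cas, inner_add_left, add_smul, Finset.sum_add_distrib]
  | smul a x _ hx =>
    rw [smul_comm, ← hx]
    simp [cas, real_inner_smul_left, mul_smul, Finset.smul_sum]

lemma hshort_dom {α : V} (hα : α ∈ D.pos) : 0 ≤ ⟪D.hshort, α⟫ := by
  by_contra! hneg
  have hα0 := D.pos_ne hα
  have haa := inner_self_pos' hα0
  have hmem := D.reflect_mem α (D.pos_subset hα) D.hshort (D.pos_subset D.hshort_mem)
  have hn : ‖rfl' α D.hshort‖ = ‖D.hshort‖ := by
    have := rfl'_norm hα0 D.hshort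
    rw [real_inner_self_eq_norm_sq, real_inner_self_eq_norm_sq] at this
    exact (sq_eq_sq₀ (norm_nonneg _) (norm_nonneg _)).1 this
  obtain ⟨k, hk⟩ := D.hshort_highest _ hmem hn
  rw [sub_sub_cancel] at hk
  obtain ⟨p, hp⟩ := D.exists_dominant
  have h1 : ⟪p, ⟪D.hshort, coroot α⟫ • α⟫ < 0 := by
    rw [real_inner_smul_right, inner_coroot]
    refine mul_neg_of_neg_of_pos ?_ (hp α hα)
    exact div_neg_of_neg_of_pos (by linarith) haa
  rw [hk, inner_sum] at h1
  refine absurd h1 (not_lt.2 (Finset.sum_nonneg fun j _ => ?_))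
  rw [real_inner_smul_right]
  exact mul_nonneg (Nat.cast_nonneg _) (hp _ (D.simpleRoot_mem j)).le

lemma hshort_pair {α : V} (hα : α ∈ D.pos) (hne : α ≠ D.hshort) :
    ⟪D.hshort, coroot α⟫ * ⟪α, coroot D.hshort⟫ = ⟪α, coroot D.hshort⟫ := by
  have hα0 := D.pos_ne hα
  have haa := inner_self_pos' hα0
  have hϑ := D.pos_subset D.hshort_mem
  have hϑ0 := D.ne_zero _ hϑ
  have htt := inner_self_pos' hϑ0
  obtain ⟨k, hk⟩ := D.crystallographic α (D.pos_subset hα) _ hϑ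
  have hdom := D.hshort_dom hα
  have hle : ⟪D.hshort, D.hshort⟫ ≤ ⟪α, α⟫ := by
    rw [real_inner_self_eq_norm_sq, real_inner_self_eq_norm_sq]
    exact pow_le_pow_left₀ (norm_nonneg _) (D.hshort_short α (D.pos_subset hα)) 2
  -- the pairing is `< 2`
  have hlt : ⟪D.hshort, coroot α⟫ < 2 := by
    rw [inner_coroot, div_lt_iff₀ haa]
    have hpos : 0 < ⟪D.hshort - α, D.hshort - α⟫ :=
      inner_self_pos' (sub_ne_zero.2 (Ne.symm hne))
    rw [real_inner_sub_sub_self] at hpos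
    linarith
  have hge : 0 ≤ ⟪D.hshort, coroot α⟫ := by
    rw [inner_coroot]; positivity
  rw [hk] at hlt hge
  have hk2 : k < 2 := by exact_mod_cast hlt
  have hk0 : 0 ≤ k := by exact_mod_cast hge
  interval_cases k
  · have : ⟪D.hshort, α⟫ = 0 := by
      rw [inner_coroot] at hk
      have := (div_eq_iff haa.ne').1 hk
      push_cast at this; linarith
    rw [inner_coroot α, real_inner_comm D.hshort α, this]; simp
  · rw [hk]; simp

lemma cas_coxeter (x : V) :
    D.cas x = (⟪D.rhoHalf, coroot D.hshort⟫ + 1) • x := by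
  obtain ⟨l, hl⟩ := D.cas_eq_smul
  have hϑ0 := D.pos_ne D.hshort_mem
  have htt := inner_self_pos' hϑ0
  have h1 : ⟪D.cas D.hshort, coroot D.hshort⟫ = 2 * l := by
    rw [hl, real_inner_smul_left, inner_coroot]; field_simp
  have h2 : ⟪D.cas D.hshort, coroot D.hshort⟫ =
      ∑ α ∈ D.pos, ⟪D.hshort, coroot α⟫ * ⟪α, coroot D.hshort⟫ := by
    rw [cas, sum_inner]
    refine Finset.sum_congr rfl fun α _ => ?_
    rw [inner_coroot D.hshort α, real_inner_smul_left, coroot, real_inner_smul_left]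
    ring
  have h22 : ⟪D.hshort, coroot D.hshort⟫ = 2 := by rw [inner_coroot]; field_simp
  have h3 : ⟪D.rhoHalf, coroot D.hshort⟫ =
      2⁻¹ * ∑ α ∈ D.pos, ⟪α, coroot D.hshort⟫ := by
    rw [rhoHalf, real_inner_smul_left, sum_inner]
  rw [← Finset.add_sum_erase _ _ D.hshort_mem] at h2 h3
  rw [Finset.sum_congr rfl (fun α hα => D.hshort_pair (Finset.mem_of_mem_erase hα)
    (Finset.ne_of_mem_erase hα)), h22] at h2
  rw [h22] at h3
  have : l = ⟪D.rhoHalf, coroot D.hshort⟫ + 1 := by rw [h3]; linarith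
  rw [hl, this]

lemma coxeter_nonneg : 0 ≤ ⟪D.rhoHalf, coroot D.hshort⟫ + 1 := by
  have hϑ0 := D.pos_ne D.hshort_mem
  have htt := inner_self_pos' hϑ0
  have h : 0 ≤ ⟪D.cas D.hshort, D.hshort⟫ := by
    rw [inner_cas, qf]
    refine Finset.sum_nonneg fun α hα => ?_
    exact mul_nonneg (div_nonneg (by norm_num) real_inner_self_nonneg) (mul_self_nonneg _)
  rw [cas_coxeter, real_inner_smul_left] at h
  exact nonneg_of_mul_nonneg_left h htt

end RootSystemData

namespace RootSystemData

open scoped ContDiff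

variable {V : Type*} [NormedAddCommGroup V] [InnerProductSpace ℝ V]
variable (D : RootSystemData V)

/-! ### The gradient of the Morse function -/

/-- `c ξ + ∑_{α > 0} v(⟨ξ,α⟩;t) α∨`. -/
def grd (c t : ℝ) (ξ : V) : V := c • ξ + ∑ α ∈ D.pos, vcl t ⟪ξ, α⟫ • coroot α

lemma hasDerivAt_inner_line (ξ ζ α : V) (s : ℝ) :
    HasDerivAt (fun s : ℝ => ⟪ξ + s • ζ, α⟫) ⟪ζ, α⟫ s := by
  have : (fun s : ℝ => ⟪ξ + s • ζ, α⟫) = fun s => ⟪ξ, α⟫ + s * ⟪ζ, α⟫ := by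
    funext s; rw [inner_add_left, real_inner_smul_left]
  rw [this]
  simpa using ((hasDerivAt_id s).mul_const ⟪ζ, α⟫).const_add ⟪ξ, α⟫

lemma hasDerivAt_primitive {t : ℝ} (ht : t ∈ Set.Ioo (-1 : ℝ) 1) (x : ℝ) :
    HasDerivAt (fun x => ∫ y in (0:ℝ)..x, mvfun t y) (vcl t x) x := by
  have hcont : Continuous (vcl t) :=
    continuous_iff_continuousAt.2 fun x => (hasDerivAt_vcl ht x).continuousAt
  rw [mvfun_eq_vcl ht]
  exact intervalIntegral.integral_hasDerivAt_right (hcont.intervalIntegrable _ _)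
    (hcont.stronglyMeasurableAtFilter _ _) hcont.continuousAt

lemma hasDerivAt_morse {c t : ℝ} (ht : t ∈ Set.Ioo (-1 : ℝ) 1) (μ ξ ζ : V) :
    HasDerivAt (fun s : ℝ => D.morse c (fun _ => t) μ (ξ + s • ζ))
      ⟪D.grd c t ξ - (2 * Real.pi) • (D.rhoVee + μ), ζ⟫ 0 := by
  have h1 : HasDerivAt (fun s : ℝ => (c / 2) * ⟪ξ + s • ζ, ξ + s • ζ⟫) (c * ⟪ξ, ζ⟫) 0 := by
    have : (fun s : ℝ => (c / 2) * ⟪ξ + s • ζ, ξ + s • ζ⟫) =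
        fun s => (c / 2) * (⟪ξ, ξ⟫ + s * (2 * ⟪ξ, ζ⟫) + s ^ 2 * ⟪ζ, ζ⟫) := by
      funext s
      rw [real_inner_add_add_self, real_inner_smul_left, real_inner_smul_right,
        real_inner_smul_right]
      ring
    rw [this]
    have := ((((hasDerivAt_id (0 : ℝ)).mul_const (2 * ⟪ξ, ζ⟫)).const_add ⟪ξ, ξ⟫).add
      ((hasDerivAt_pow 2 (0 : ℝ)).mul_const ⟪ζ, ζ⟫)).const_mul (c / 2)
    convert! this using 1
    simp; ring
  have h2 : HasDerivAt (fun s : ℝ => 2 * Real.pi * ⟪D.rhoVee + μ, ξ + s • ζ⟫)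
      (2 * Real.pi * ⟪D.rhoVee + μ, ζ⟫) 0 := by
    simp_rw [real_inner_comm _ (D.rhoVee + μ)]
    exact (hasDerivAt_inner_line ξ ζ (D.rhoVee + μ) 0).const_mul _
  have h3 : HasDerivAt (fun s : ℝ => ∑ α ∈ D.pos, (2 / ⟪α, α⟫) *
      ∫ x in (0:ℝ)..(⟪ξ + s • ζ, α⟫), mvfun t x)
      (∑ α ∈ D.pos, (2 / ⟪α, α⟫) * (vcl t ⟪ξ, α⟫ * ⟪ζ, α⟫)) 0 := by
    refine HasDerivAt.fun_sum fun α _ => HasDerivAt.const_mul _ ?_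
    have := HasDerivAt.comp (0 : ℝ) (hasDerivAt_primitive ht ⟪ξ + (0 : ℝ) • ζ, α⟫)
      (hasDerivAt_inner_line ξ ζ α 0)
    rw [zero_smul, add_zero] at this
    exact this
  have := (h1.sub h2).add h3
  convert! this using 1
  rw [inner_sub_left, grd, inner_add_left, sum_inner, real_inner_smul_left, real_inner_smul_left]
  have : ∀ α : V, ⟪vcl t ⟪ξ, α⟫ • coroot α, ζ⟫ = (2 / ⟪α, α⟫) * (vcl t ⟪ξ, α⟫ * ⟪ζ, α⟫) := by
    intro α
    rw [real_inner_smul_left, real_inner_comm ζ, inner_coroot]; ring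
  simp_rw [this]
  ring

lemma grd_eq_of_min {c t : ℝ} (ht : t ∈ Set.Ioo (-1 : ℝ) 1) {μ ξ : V}
    (h : ∀ ζ : V, D.morse c (fun _ => t) μ ξ ≤ D.morse c (fun _ => t) μ ζ) :
    D.grd c t ξ = (2 * Real.pi) • (D.rhoVee + μ) := by
  rw [← sub_eq_zero]
  refine ext_inner_right ℝ fun ζ => ?_
  rw [inner_zero_left]
  refine IsLocalMin.hasDerivAt_eq_zero ?_ (D.hasDerivAt_morse ht μ ξ ζ)
  refine Filter.Eventually.of_forall fun s => ?_
  simpa using h (ξ + s • ζ)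

lemma grd_mono {c t : ℝ} (ht : t ∈ Set.Ioo (-1 : ℝ) 1) (ξ η : V) :
    c * ‖ξ - η‖ ^ 2 ≤ ⟪D.grd c t ξ - D.grd c t η, ξ - η⟫ := by
  have e : D.grd c t ξ - D.grd c t η = c • (ξ - η) +
      ∑ α ∈ D.pos, (vcl t ⟪ξ, α⟫ - vcl t ⟪η, α⟫) • coroot α := by
    simp only [grd, sub_smul, Finset.sum_sub_distrib, smul_sub]; abel
  rw [e, inner_add_left, real_inner_smul_left, real_inner_self_eq_norm_sq, sum_inner]
  refine le_add_of_nonneg_right (Finset.sum_nonneg fun α hα => ?_)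
  have haa := inner_self_pos' (D.pos_ne hα)
  rw [real_inner_smul_left, real_inner_comm (ξ - η), inner_coroot, inner_sub_left, mul_div_assoc',
    mul_left_comm]
  refine div_nonneg (mul_nonneg (by norm_num) ?_) haa.le
  rcases le_total ⟪ξ, α⟫ ⟪η, α⟫ with h | h
  · exact mul_nonneg_of_nonpos_of_nonpos (sub_nonpos.2 (vcl_mono ht h)) (sub_nonpos.2 h)
  · exact mul_nonneg (sub_nonneg.2 (vcl_mono ht h)) (sub_nonneg.2 h)

lemma grd_dist {c t : ℝ} (ht : t ∈ Set.Ioo (-1 : ℝ) 1) (ξ η : V) :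
    c * ‖ξ - η‖ ≤ ‖D.grd c t ξ - D.grd c t η‖ := by
  rcases eq_or_ne (‖ξ - η‖) 0 with h | h
  · rw [h]; simp
  have hp : 0 < ‖ξ - η‖ := lt_of_le_of_ne (norm_nonneg _) h.symm
  have h1 := D.grd_mono (c := c) ht ξ η
  have h2 := real_inner_le_norm (D.grd c t ξ - D.grd c t η) (ξ - η)
  refine le_of_mul_le_mul_right ?_ hp
  nlinarith

lemma grd_inj {c t : ℝ} (hc : 0 < c) (ht : t ∈ Set.Ioo (-1 : ℝ) 1) {ξ η : V}
    (h : D.grd c t ξ = D.grd c t η) : ξ = η := by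
  have := D.grd_dist (c := c) ht ξ η
  rw [h, sub_self, norm_zero] at this
  rw [← sub_eq_zero, ← norm_le_zero_iff]
  exact nonpos_of_mul_nonpos_right this hc

/-! ### Analyticity -/

lemma contDiffAt_grd {c : ℝ} (p : ℝ × V) (hp : p.1 ∈ Set.Ioo (-1 : ℝ) 1) :
    ContDiffAt ℝ ω (fun p : ℝ × V => D.grd c p.1 p.2) p := by
  unfold grd
  refine (contDiffAt_const.smul contDiffAt_snd).add (ContDiffAt.sum fun α _ => ?_)
  refine ContDiffAt.smul ?_ contDiffAt_const
  have hin : ContDiffAt ℝ ω (fun p : ℝ × V => ⟪p.2, α⟫) p :=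
    contDiffAt_snd.inner ℝ contDiffAt_const
  unfold vcl
  refine hin.add (contDiffAt_const.mul
    (Real.contDiff_arctan.contDiffAt.comp p ?_))
  refine ContDiffAt.div (contDiffAt_fst.mul hin.sin)
    (contDiffAt_const.sub (contDiffAt_fst.mul hin.cos)) (den1_pos hp _).ne'

lemma hasDerivAt_grd_line {c t : ℝ} (ht : t ∈ Set.Ioo (-1 : ℝ) 1) (ξ ζ : V) :
    HasDerivAt (fun s : ℝ => D.grd c t (ξ + s • ζ))
      (c • ζ + ∑ α ∈ D.pos, (vder t ⟪ξ, α⟫ * ⟪ζ, α⟫) • coroot α) 0 := by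
  unfold grd
  have h0 : HasDerivAt (fun s : ℝ => ξ + s • ζ) ζ 0 := by
    simpa using ((hasDerivAt_id (0 : ℝ)).smul_const ζ).const_add ξ
  refine (h0.const_smul c).add (HasDerivAt.fun_sum fun α _ => HasDerivAt.smul_const ?_ _)
  have := HasDerivAt.comp (0 : ℝ) (hasDerivAt_vcl ht ⟪ξ + (0 : ℝ) • ζ, α⟫)
      (hasDerivAt_inner_line ξ ζ α 0)
  rw [zero_smul, add_zero] at this
  exact this

lemma hess_inj {c t : ℝ} (hc : 0 < c) (ht : t ∈ Set.Ioo (-1 : ℝ) 1) (ξ ζ : V)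
    (h : c • ζ + ∑ α ∈ D.pos, (vder t ⟪ξ, α⟫ * ⟪ζ, α⟫) • coroot α = 0) : ζ = 0 := by
  have h1 : ⟪c • ζ + ∑ α ∈ D.pos, (vder t ⟪ξ, α⟫ * ⟪ζ, α⟫) • coroot α, ζ⟫ = 0 := by
    rw [h, inner_zero_left]
  rw [inner_add_left, real_inner_smul_left, sum_inner] at h1
  have h2 : 0 ≤ ∑ α ∈ D.pos, ⟪(vder t ⟪ξ, α⟫ * ⟪ζ, α⟫) • coroot α, ζ⟫ := by
    refine Finset.sum_nonneg fun α hα => ?_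
    have haa := inner_self_pos' (D.pos_ne hα)
    have hv := vder_pos ht ⟪ξ, α⟫
    rw [real_inner_smul_left, real_inner_comm ζ, inner_coroot]
    have : vder t ⟪ξ, α⟫ * ⟪ζ, α⟫ * (2 * ⟪ζ, α⟫ / ⟪α, α⟫) =
      2 * vder t ⟪ξ, α⟫ * ⟪ζ, α⟫ ^ 2 / ⟪α, α⟫ := by ring
    rw [this]; positivity
  by_contra hz
  have := mul_pos hc (inner_self_pos' hz)
  linarith

lemma analyticAt_xi {c : ℝ} (hc : 0 < c) (b : V) (xi : ℝ → V)
    (hxi : ∀ t ∈ Set.Ioo (-1 : ℝ) 1, D.grd c t (xi t) = b) {t₀ : ℝ}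
    (ht₀ : t₀ ∈ Set.Ioo (-1 : ℝ) 1) : AnalyticAt ℝ xi t₀ := by
  have := D.finDim
  have : CompleteSpace V := FiniteDimensional.complete ℝ V
  let Φ : ℝ × V → ℝ × V := fun p => (p.1, D.grd c p.1 p.2)
  let a : ℝ × V := (t₀, xi t₀)
  have hG := D.contDiffAt_grd (c := c) a ht₀
  have hΦ : ContDiffAt ℝ ω Φ a := contDiffAt_fst.prodMk hG
  have hGd := (hG.differentiableAt (by simp)).hasFDerivAt
  set G' := fderiv ℝ (fun p : ℝ × V => D.grd c p.1 p.2) a with hG'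
  have hΦd : HasFDerivAt Φ ((ContinuousLinearMap.fst ℝ ℝ V).prod G') a :=
    hasFDerivAt_fst.prodMk hGd
  have hinj : Function.Injective ((ContinuousLinearMap.fst ℝ ℝ V).prod G') := by
    rw [injective_iff_map_eq_zero]
    rintro ⟨τ, ζ⟩ h
    have hτ : τ = 0 := congrArg Prod.fst h
    subst hτ
    have hz : G' (0, ζ) = 0 := congrArg Prod.snd h
    have hline : HasDerivAt (fun s : ℝ => ((t₀, xi t₀ + s • ζ) : ℝ × V)) (0, ζ) 0 := by
      refine (hasDerivAt_const (0 : ℝ) t₀).prodMk ?_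
      simpa using ((hasDerivAt_id (0 : ℝ)).smul_const ζ).const_add (xi t₀)
    have hcomp : HasDerivAt (fun s : ℝ => D.grd c t₀ (xi t₀ + s • ζ)) (G' (0, ζ)) 0 := by
      have hGd' : HasFDerivAt (fun p : ℝ × V => D.grd c p.1 p.2) G'
          ((t₀, xi t₀ + (0 : ℝ) • ζ) : ℝ × V) := by
        rw [zero_smul, add_zero]; exact hGd
      exact hGd'.comp_hasDerivAt (0 : ℝ) hline
    have := hcomp.unique (D.hasDerivAt_grd_line ht₀ (xi t₀) ζ)
    rw [hz] at this
    rw [D.hess_inj hc ht₀ (xi t₀) ζ this.symm]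
    rfl
  let e : (ℝ × V) ≃L[ℝ] (ℝ × V) :=
    (LinearEquiv.ofInjectiveEndo
      (((ContinuousLinearMap.fst ℝ ℝ V).prod G' : (ℝ × V) →L[ℝ] (ℝ × V)) : (ℝ × V) →ₗ[ℝ] (ℝ × V))
      hinj).toContinuousLinearEquiv
  have he : (e : (ℝ × V) →L[ℝ] (ℝ × V)) = (ContinuousLinearMap.fst ℝ ℝ V).prod G' := by
    ext x <;> rfl
  rw [← he] at hΦd
  have hω : (ω : WithTop ℕ∞) ≠ 0 := by simp
  have hloc := hΦ.to_localInverse hΦd hω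
  have hright : ∀ᶠ y in nhds (Φ a), Φ (hΦ.localInverse hΦd hω y) = y :=
    (hΦ.hasStrictFDerivAt' hΦd hω).eventually_right_inverse
  have hΦa : Φ a = (t₀, b) := by simp only [Φ, a, hxi t₀ ht₀]
  rw [hΦa] at hloc hright
  have hpath : ContDiffAt ℝ ω (fun t : ℝ => ((t, b) : ℝ × V)) t₀ :=
    contDiffAt_id.prodMk contDiffAt_const
  have hg : ContDiffAt ℝ ω (fun t : ℝ => (hΦ.localInverse hΦd hω (t, b)).2) t₀ :=
    contDiffAt_snd.comp t₀ (ContDiffAt.comp t₀ hloc hpath)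
  refine hg.analyticAt.congr ?_
  filter_upwards [hpath.continuousAt.eventually hright, Ioo_mem_nhds ht₀.1 ht₀.2] with t h1 h2
  set q := hΦ.localInverse hΦd hω (t, b)
  have e1 : q.1 = t := congrArg Prod.fst h1
  have e2 : D.grd c q.1 q.2 = b := congrArg Prod.snd h1
  rw [e1] at e2
  exact D.grd_inj hc h2 (e2.trans (hxi t h2).symm)

/-! ### Limits -/

lemma grd_zero (c : ℝ) (ξ : V) :
    D.grd c 0 ξ = (c + (⟪D.rhoHalf, coroot D.hshort⟫ + 1)) • ξ := by
  rw [add_smul, ← cas_coxeter]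
  simp only [grd, vcl_zero, cas]

lemma tendsto_one {c : ℝ} (hc : 0 < c) {μ : V}
    (hμdom : ∀ α ∈ D.pos, 0 ≤ ⟪μ, α⟫ ∧ ⟪μ, α⟫ ≤ c) (xi : ℝ → V)
    (hxi : ∀ t ∈ Set.Ioo (-1 : ℝ) 1, D.grd c t (xi t) = (2 * Real.pi) • (D.rhoVee + μ)) :
    Filter.Tendsto xi (nhdsWithin 1 (Set.Iio (1 : ℝ))) (nhds ((2 * Real.pi / c) • μ)) := by
  obtain ⟨p, hp⟩ := D.exists_small_dominant
  set x₀ : V := (2 * Real.pi / c) • μ with hx₀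
  have hpi := Real.pi_pos
  have hx0 : ∀ α ∈ D.pos, 0 ≤ ⟪x₀, α⟫ ∧ ⟪x₀, α⟫ ≤ 2 * Real.pi := by
    intro α hα
    obtain ⟨h1, h2⟩ := hμdom α hα
    rw [hx₀, real_inner_smul_left]
    refine ⟨by positivity, ?_⟩
    rw [div_mul_eq_mul_div, div_le_iff₀ hc]
    nlinarith
  rw [Metric.tendsto_nhds]
  intro ε hε
  obtain ⟨s, hs0, hs1, hs⟩ : ∃ s : ℝ, 0 < s ∧ s ≤ 1 ∧ s * ‖p - x₀‖ < ε / 4 := by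
    refine ⟨min 1 (ε / (8 * (‖p - x₀‖ + 1))), by positivity, min_le_left _ _, ?_⟩
    have hn := norm_nonneg (p - x₀)
    calc min 1 (ε / (8 * (‖p - x₀‖ + 1))) * ‖p - x₀‖
        ≤ (ε / (8 * (‖p - x₀‖ + 1))) * (‖p - x₀‖ + 1) := by
          gcongr
          · exact min_le_right _ _
          · linarith
      _ = ε / 8 := by field_simp
      _ < ε / 4 := by linarith
  set η : V := x₀ + s • (p - x₀) with hη
  have hηα : ∀ α ∈ D.pos, 0 < ⟪η, α⟫ ∧ ⟪η, α⟫ < 2 * Real.pi := by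
    intro α hα
    obtain ⟨h1, h2⟩ := hx0 α hα
    obtain ⟨h3, h4⟩ := hp α hα
    have e : ⟪η, α⟫ = (1 - s) * ⟪x₀, α⟫ + s * ⟪p, α⟫ := by
      rw [hη, inner_add_left, real_inner_smul_left (p - x₀), inner_sub_left]; ring
    have h5 := mul_nonneg (sub_nonneg.2 hs1) h1
    have h6 := mul_pos hs0 h3
    have h7 := mul_nonneg (sub_nonneg.2 hs1) (sub_nonneg.2 h2)
    have h8 := mul_pos hs0 (sub_pos.2 h4)
    rw [e]
    constructor <;> linarith
  have hηd : ‖η - x₀‖ < ε / 4 := by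
    rw [hη, add_sub_cancel_left, norm_smul, Real.norm_of_nonneg hs0.le]; exact hs
  have hlim : Filter.Tendsto (fun t => D.grd c t η) (nhds 1)
      (nhds (c • η + ∑ α ∈ D.pos, Real.pi • coroot α)) := by
    unfold grd
    refine tendsto_const_nhds.add (tendsto_finsetSum _ fun α hα => ?_)
    exact (vcl_tendsto (hηα α hα).1 (hηα α hα).2).smul_const _
  have hval : c • η + ∑ α ∈ D.pos, Real.pi • coroot α =
      (2 * Real.pi) • (D.rhoVee + μ) + c • (η - x₀) := by
    have : c • x₀ = (2 * Real.pi) • μ := by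
      rw [hx₀, smul_smul]; congr 1; field_simp
    clear_value η
    rw [smul_sub, this, rhoVee, smul_add, smul_smul (2 * Real.pi), ← Finset.smul_sum]
    have : 2 * Real.pi * 2⁻¹ = Real.pi := by ring
    rw [this]; abel
  rw [hval] at hlim
  have hev : ∀ᶠ t in nhdsWithin 1 (Set.Iio (1 : ℝ)),
      dist (D.grd c t η) ((2 * Real.pi) • (D.rhoVee + μ) + c • (η - x₀)) < c * (ε / 4) :=
    (Metric.tendsto_nhds.1 hlim _ (by positivity)).filter_mono nhdsWithin_le_nhds
  have hev2 : ∀ᶠ t in nhdsWithin 1 (Set.Iio (1 : ℝ)), t ∈ Set.Ioo (-1 : ℝ) 1 :=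
    Ioo_mem_nhdsLT (by norm_num)
  filter_upwards [hev, hev2] with t h1 h2
  have h3 := D.grd_dist (c := c) h2 η (xi t)
  rw [hxi t h2] at h3
  rw [dist_eq_norm] at h1 ⊢
  set b := (2 * Real.pi) • (D.rhoVee + μ)
  have h4 : ‖D.grd c t η - b‖ ≤ ‖D.grd c t η - (b + c • (η - x₀))‖ + ‖c • (η - x₀)‖ := by
    have : D.grd c t η - b = (D.grd c t η - (b + c • (η - x₀))) + c • (η - x₀) := by abel
    rw [this]; exact (norm_add_le _ _).trans (by simp)
  rw [norm_smul, Real.norm_of_nonneg hc.le] at h4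
  have h5 : ‖η - xi t‖ < ε / 2 := by
    refine lt_of_mul_lt_mul_left ?_ hc.le
    nlinarith
  have h6 : ‖xi t - x₀‖ ≤ ‖η - x₀‖ + ‖η - xi t‖ := by
    have : xi t - x₀ = (η - x₀) - (η - xi t) := by abel
    rw [this]; exact norm_sub_le _ _
  linarith

end RootSystemData

open RootSystemData in
/-- in the equal-parameter case, for `μ ∈ P_c^{∨,+}` the global minimum
`t ↦ ξ_μ(t)` of the Morse function is continuous (indeed real-analytic) on `(-1,1)`,
with `ξ_μ(t) → (2π/(c+h(R₀)))(ρ∨+μ)` as `t → 0` (where `h(R₀) = ⟨ρ,ϑ∨⟩+1` is the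
Coxeter number) and `ξ_μ(t) → 2πc⁻¹μ` as `t → 1⁻`. -/
theorem statement14 {V : Type*} [NormedAddCommGroup V] [InnerProductSpace ℝ V]
    (D : RootSystemData V) (c : ℝ) (hc : 0 < c)
    (μ : V) (hμ : μ ∈ D.coweightLattice)
    (hμdom : ∀ α ∈ D.pos, 0 ≤ ⟪μ, α⟫ ∧ ⟪μ, α⟫ ≤ c)
    (xi : ℝ → V)
    (hxi : ∀ t ∈ Set.Ioo (-1 : ℝ) 1, ∀ ζ : V,
      D.morse c (fun _ => t) μ (xi t) ≤ D.morse c (fun _ => t) μ ζ)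
    (huniq : ∀ t ∈ Set.Ioo (-1 : ℝ) 1, ∀ ξ' : V,
      (∀ ζ : V, D.morse c (fun _ => t) μ ξ' ≤ D.morse c (fun _ => t) μ ζ) → ξ' = xi t) :
    ContinuousOn xi (Set.Ioo (-1 : ℝ) 1) ∧
    AnalyticOnNhd ℝ xi (Set.Ioo (-1 : ℝ) 1) ∧
    Filter.Tendsto xi (nhdsWithin 0 (Set.Ioo (-1 : ℝ) 1))
      (nhds ((2 * Real.pi / (c + (⟪D.rhoHalf, coroot D.hshort⟫ + 1))) • (D.rhoVee + μ))) ∧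
    Filter.Tendsto xi (nhdsWithin 1 (Set.Iio (1 : ℝ)))
      (nhds ((2 * Real.pi / c) • μ)) := by
  have hcrit : ∀ t ∈ Set.Ioo (-1 : ℝ) 1, D.grd c t (xi t) = (2 * Real.pi) • (D.rhoVee + μ) :=
    fun t ht => D.grd_eq_of_min ht (hxi t ht)
  have han : AnalyticOnNhd ℝ xi (Set.Ioo (-1 : ℝ) 1) :=
    fun t ht => D.analyticAt_xi hc _ xi hcrit ht
  refine ⟨han.continuousOn, han, ?_, D.tendsto_one hc hμdom xi hcrit⟩
  have h0 : (0 : ℝ) ∈ Set.Ioo (-1 : ℝ) 1 := by norm_num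
  have hx : xi 0 = (2 * Real.pi / (c + (⟪D.rhoHalf, coroot D.hshort⟫ + 1))) •
      (D.rhoVee + μ) := by
    have h := hcrit 0 h0
    have hne : c + (⟪D.rhoHalf, coroot D.hshort⟫ + 1) ≠ 0 := by
      have := D.coxeter_nonneg
      positivity
    rw [D.grd_zero] at h
    rw [div_eq_inv_mul, mul_smul, ← h, smul_smul, inv_mul_cancel₀ hne, one_smul]
  rw [← hx]
  exact han.continuousOn 0 h0
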